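/- For every graphon h, the Laplacian operator L_h is a bounded linear operator on L²([0,1]) (in particular ‖L_h u‖₂ ≤ 2‖u‖₂ for all u ∈ L²([0,1])), and the map h ↦ ‖L_h‖ is lower semi-continuous with respect to the cut metric: if (h_n) is a sequence of graphons with δ_□(h_n, h) → 0, then liminf_{n→∞} ‖L_{h_n}‖ ≥ ‖L_h‖. -/

import Mathlib

/-!
Boundedness of `L_h` is Jensen's inequality: `(L_h u)(x)² ≤ 2 u(x)² + 2 ‖u‖²`.

For lower semi-continuity, fix `M > liminf ‖L_{h_n}‖`. Then there are graphons `f` arbitrarily close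
to `h` in the cut metric with `‖L_f‖ < M`, and it is enough to prove `‖L_h‖ ≤ M`
(`lapNorm_le_of_approx`). Choose a relabelling `φ` for which `f` is close to `g = h ∘ (φ × φ)` in
cut distance. For simple functions `u` and `v`,

  `⟨L_g (u ∘ φ), v ∘ φ⟩ - ⟨L_f (u ∘ φ), v ∘ φ⟩`

is an integral of the kernel `g - f` against finitely many products of indicators of sets, so it is
at most `K · d_□(f, g)` in absolute value, where `K` depends on `u` and `v` but not on `f` or `φ`
(`exists_simple_bound`, `exists_pairing_bound`). Since `φ` preserves measure, `⟨L_g (u ∘ φ), v ∘ φ⟩`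
equals `⟨L_h u, v⟩`, and the norms of `u ∘ φ` and `v ∘ φ` are those of `u` and `v`. Letting the
distance tend to zero gives `⟨L_h u, v⟩ ≤ M ‖u‖ ‖v‖` (`pairing_le_of_approx`). Duality and the
density of simple functions, together with the bound `‖L_h‖ ≤ 2`, extend this to
`‖L_h u‖ ≤ M ‖u‖` for every `u` in `L²`.
-/

open MeasureTheory Filter Set
open scoped BigOperators

noncomputable section

/-- The unit interval `[0,1] ⊆ ℝ`. -/
def UI : Set ℝ := Set.Icc 0 1

/-- A graphon: a symmetric measurable function with values in `[0,1]`. -/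
def IsGraphon (f : ℝ → ℝ → ℝ) : Prop :=
  (∀ x y, f x y = f y x) ∧ Measurable (Function.uncurry f) ∧
    ∀ x y, f x y ∈ Set.Icc (0 : ℝ) 1

/-- Membership in `L²([0,1])`. -/
def MemL2 (u : ℝ → ℝ) : Prop :=
  Measurable u ∧ IntegrableOn (fun x => u x ^ 2) UI

/-- The `L²([0,1])`-norm. -/
def l2 (u : ℝ → ℝ) : ℝ := (∫ x in UI, u x ^ 2) ^ (1/2 : ℝ)

/-- The Laplacian graphon operator applied to `u`. -/
def lapApply (f : ℝ → ℝ → ℝ) (u : ℝ → ℝ) (x : ℝ) : ℝ :=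
  ∫ y in UI, f x y * (u x - u y)

/-- The operator norm of the Laplacian graphon operator. -/
def lapNorm (f : ℝ → ℝ → ℝ) : ℝ :=
  sSup {c | ∃ u : ℝ → ℝ, MemL2 u ∧ l2 u = 1 ∧ c = l2 (lapApply f u)}

/-- The degree function of a graphon. -/
def degFun (f : ℝ → ℝ → ℝ) (x : ℝ) : ℝ := ∫ y in UI, f x y

/-- The essential supremum of the degree function. -/
def degSup (f : ℝ → ℝ → ℝ) : ℝ := essSup (degFun f) (volume.restrict UI)

/-- Bernoulli relative entropy `R(a|b)`. -/
def relEnt (a b : ℝ) : ℝ :=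
  a * Real.log (a / b) + (1 - a) * Real.log ((1 - a) / (1 - b))

/-- The relative entropy functional `I_r(h)`. -/
def Ir (r h : ℝ → ℝ → ℝ) : ℝ :=
  ∫ p in UI ×ˢ UI, relEnt (h p.1 p.2) (r p.1 p.2)

/-- The downward rate function `ψ_r`. -/
def psiLow (r : ℝ → ℝ → ℝ) (β : ℝ) : ℝ :=
  sInf {c | ∃ h, IsGraphon h ∧ lapNorm h ≤ β ∧ c = Ir r h}

/-- A Lebesgue-measure-preserving bijection of `[0,1]`. -/
structure MPB where
  toFun : ℝ → ℝ
  bijOn : Set.BijOn toFun UI UI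
  measurePreserving :
    MeasurePreserving toFun (volume.restrict UI) (volume.restrict UI)

/-- The cut distance `d_□`. -/
def cutDist (f g : ℝ → ℝ → ℝ) : ℝ :=
  sSup {c | ∃ S T : Set ℝ, MeasurableSet S ∧ MeasurableSet T ∧ S ⊆ UI ∧ T ⊆ UI ∧
    c = |∫ x in S, ∫ y in T, (f x y - g x y)|}

/-- The cut metric `δ_□`. -/
def cutMetric (f g : ℝ → ℝ → ℝ) : ℝ :=
  sInf {c | ∃ φ : MPB, c = cutDist f (fun x y => g (φ.toFun x) (φ.toFun y))}

/-- The rate function `J_r` (infimum of `I_r` over relabelings). -/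
def Jrate (r h : ℝ → ℝ → ℝ) : ℝ :=
  sInf {c | ∃ φ : MPB, c = Ir r (fun x y => h (φ.toFun x) (φ.toFun y))}

/-- Open sets of graphons in the topology induced by the cut metric. -/
def CutOpen (O : Set (ℝ → ℝ → ℝ)) : Prop :=
  ∀ f ∈ O, ∃ ε > 0, ∀ g, IsGraphon g → cutMetric f g < ε → g ∈ O

/-- Closed sets of graphons in the topology induced by the cut metric. -/
def CutClosed (C : Set (ℝ → ℝ → ℝ)) : Prop :=
  ∀ f, IsGraphon f → f ∉ C → ∃ ε > 0, ∀ g, IsGraphon g → cutMetric f g < ε → g ∉ C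

/-- Adjacency matrices of simple graphs on `N` vertices. -/
abbrev AdjMat (N : ℕ) :=
  {A : Fin N → Fin N → Bool // (∀ i j, A i j = A j i) ∧ ∀ i, A i i = false}

/-- Probability weight of a configuration of the inhomogeneous ERRG. -/
def errgWeight (N : ℕ) (p : Fin N → Fin N → ℝ) (A : AdjMat N) : ℝ :=
  ∏ i : Fin N, ∏ j : Fin N,
    if i < j then (if A.1 i j then p i j else 1 - p i j) else 1

open Classical in
/-- The law of the inhomogeneous ERRG with edge probabilities `p`. -/
def errgProb (N : ℕ) (p : Fin N → Fin N → ℝ) (E : Set (AdjMat N)) : ℝ :=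
  ∑ A : AdjMat N, if A ∈ E then errgWeight N p A else 0

/-- Degree of vertex `i`. -/
def degRG {N : ℕ} (A : AdjMat N) (i : Fin N) : ℝ :=
  ∑ j : Fin N, if A.1 i j then (1 : ℝ) else 0

/-- The Laplacian matrix `L = D - A`. -/
def lapMat {N : ℕ} (A : AdjMat N) : Matrix (Fin N) (Fin N) ℝ :=
  fun i j => (if i = j then degRG A i else 0) - (if A.1 i j then 1 else 0)

/-- The largest eigenvalue of a matrix. -/
def lambdaMax {N : ℕ} (M : Matrix (Fin N) (Fin N) ℝ) : ℝ :=
  sSup {μ | ∃ v : Fin N → ℝ, v ≠ 0 ∧ M.mulVec v = μ • v}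

/-- The spectral norm (largest absolute value of an eigenvalue) of a matrix. -/
def specNorm {N : ℕ} (M : Matrix (Fin N) (Fin N) ℝ) : ℝ :=
  sSup {c | ∃ μ : ℝ, (∃ v : Fin N → ℝ, v ≠ 0 ∧ M.mulVec v = μ • v) ∧ c = |μ|}

/-- The `i`-th block of `[0,1]` divided into `N` blocks. -/
def blk (N : ℕ) (i : Fin N) : Set ℝ :=
  Set.Ico (((i : ℕ) : ℝ) / N) ((((i : ℕ) : ℝ) + 1) / N)

open Classical in
/-- The empirical graphon of a graph on `N` vertices. -/
def empGraphon (N : ℕ) (A : AdjMat N) (x y : ℝ) : ℝ :=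
  if ∃ i j : Fin N, A.1 i j = true ∧ x ∈ blk N i ∧ y ∈ blk N j then 1 else 0

/-- A function that is constant on the `N × N` blocks. -/
def IsBlockGraphon (N : ℕ) (f : ℝ → ℝ → ℝ) : Prop :=
  ∀ i j : Fin N, ∀ x₁ ∈ blk N i, ∀ x₂ ∈ blk N i, ∀ y₁ ∈ blk N j, ∀ y₂ ∈ blk N j,
    f x₁ y₁ = f x₂ y₂

/-- Edge probabilities induced by a block graphon. -/
def pOf (N : ℕ) (f : ℝ → ℝ → ℝ) (i j : Fin N) : ℝ :=
  f (((i : ℕ) : ℝ) / N) (((j : ℕ) : ℝ) / N)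

/-- The cumulant generating function `Λ_r(x,θ)`. -/
def Lam (r : ℝ → ℝ → ℝ) (x θ : ℝ) : ℝ :=
  ∫ y in UI, Real.log (r x y * Real.exp θ + 1 - r x y)

/-- The Legendre transform `J_r(x,β)`. -/
def Jfun (r : ℝ → ℝ → ℝ) (x β : ℝ) : ℝ :=
  ⨆ θ : ℝ, (θ * β - Lam r x θ)

/-- The upward rate function `ψ̂_r`. -/
def psiHat (r : ℝ → ℝ → ℝ) (β : ℝ) : ℝ :=
  ⨅ x : UI, Jfun r (x : ℝ) β

/-- The variance function `v_r`. -/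
def vr (r : ℝ → ℝ → ℝ) (x : ℝ) : ℝ := ∫ y in UI, r x y * (1 - r x y)

/-- The tilted kernel `r̂` (Cramér transform with parameter `θ`). -/
def tilt (r : ℝ → ℝ → ℝ) (θ x y : ℝ) : ℝ :=
  Real.exp θ * r x y / (Real.exp θ * r x y + 1 - r x y)

/-- The tilted mean degree. -/
def degMoment (r : ℝ → ℝ → ℝ) (x θ : ℝ) : ℝ := ∫ y in UI, tilt r θ x y

/-- Extended-real-valued logarithm with `log x = ⊥` for `x ≤ 0`. -/
def elog (x : ℝ) : EReal := if x ≤ 0 then ⊥ else ((Real.log x : ℝ) : EReal)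

/-- Standing assumptions on the reference graphon. -/
def GraphonAssump (r : ℝ → ℝ → ℝ) : Prop :=
  IsGraphon r ∧ (∀ x ∈ UI, ∀ y ∈ UI, r x y ∈ Set.Ioo (0:ℝ) 1) ∧
    IntegrableOn (fun p : ℝ × ℝ => Real.log (r p.1 p.2)) (UI ×ˢ UI) ∧
    IntegrableOn (fun p : ℝ × ℝ => Real.log (1 - r p.1 p.2)) (UI ×ˢ UI)

/-- Standing convergence assumptions on the block graphons `r_N`. -/
def SeqAssump (r : ℝ → ℝ → ℝ) (rN : ℕ → ℝ → ℝ → ℝ) : Prop :=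
  (∀ N, IsGraphon (rN N)) ∧ (∀ N, IsBlockGraphon N (rN N)) ∧
  (∀ N, ∀ x ∈ UI, ∀ y ∈ UI, rN N x y ∈ Set.Ioo (0:ℝ) 1) ∧
  (∀ᵐ p ∂(volume.restrict (UI ×ˢ UI)),
    Tendsto (fun N => rN N (p : ℝ × ℝ).1 p.2) atTop (nhds (r p.1 p.2))) ∧
  Tendsto (fun N => ∫ p in UI ×ˢ UI, |rN N p.1 p.2 - r p.1 p.2|) atTop (nhds 0) ∧
  Tendsto (fun N => ∫ p in UI ×ˢ UI,
    |Real.log (rN N p.1 p.2) - Real.log (r p.1 p.2)|) atTop (nhds 0) ∧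
  Tendsto (fun N => ∫ p in UI ×ˢ UI,
    |Real.log (1 - rN N p.1 p.2) - Real.log (1 - r p.1 p.2)|) atTop (nhds 0)

/-- A graphon bounded between `rm` and `rp`, `0 < rm ≤ rp < 1`. -/
def BoundedGraphon (r : ℝ → ℝ → ℝ) (rm rp : ℝ) : Prop :=
  IsGraphon r ∧ 0 < rm ∧ rm ≤ rp ∧ rp < 1 ∧
    ∀ x ∈ UI, ∀ y ∈ UI, rm ≤ r x y ∧ r x y ≤ rp

/-- Sup-norm convergence on `[0,1]²`. -/
def SupConv (r : ℝ → ℝ → ℝ) (rN : ℕ → ℝ → ℝ → ℝ) : Prop :=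
  ∀ ε > 0, ∃ N₀, ∀ N ≥ N₀, ∀ x ∈ UI, ∀ y ∈ UI, |rN N x y - r x y| ≤ ε

/-- Pointwise convergence on `[0,1]²`. -/
def PtConv (r : ℝ → ℝ → ℝ) (rN : ℕ → ℝ → ℝ → ℝ) : Prop :=
  ∀ x ∈ UI, ∀ y ∈ UI, Tendsto (fun N => rN N x y) atTop (nhds (r x y))

/-- Non-negative definiteness of a kernel. -/
def NonnegDef (r : ℝ → ℝ → ℝ) : Prop :=
  ∀ u : ℝ → ℝ, MemL2 u → 0 ≤ ∫ p in UI ×ˢ UI, r p.1 p.2 * u p.1 * u p.2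

/-- `μ` is an eigenvalue of the Laplacian operator `L_f` on `L²([0,1])`. -/
def lapEigen (f : ℝ → ℝ → ℝ) (μ : ℝ) : Prop :=
  ∃ u : ℝ → ℝ, MemL2 u ∧ (∫ x in UI, u x ^ 2) ≠ 0 ∧
    ∀ᵐ x ∂(volume.restrict UI), lapApply f u x = μ * u x

/-! ### The space `L²([0,1])` -/

/-- Lebesgue measure on `[0,1]`, a probability measure. -/
abbrev muI : Measure ℝ := volume.restrict UI

instance : IsProbabilityMeasure muI := ⟨by simp [muI, UI]⟩

lemma MemL2.memLp {u : ℝ → ℝ} (hu : MemL2 u) : MemLp u 2 muI :=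
  (memLp_two_iff_integrable_sq hu.1.aestronglyMeasurable).2 hu.2

lemma memL2_of_memLp {u : ℝ → ℝ} (hm : Measurable u) (hu : MemLp u 2 muI) : MemL2 u :=
  ⟨hm, (memLp_two_iff_integrable_sq hm.aestronglyMeasurable).1 hu⟩

lemma MemL2.integrable {u : ℝ → ℝ} (hu : MemL2 u) : Integrable u muI :=
  hu.memLp.integrable (by norm_num)

lemma MemL2.sub {u v : ℝ → ℝ} (hu : MemL2 u) (hv : MemL2 v) : MemL2 (fun x => u x - v x) :=
  memL2_of_memLp (hu.1.sub hv.1) (hu.memLp.sub hv.memLp)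

lemma MemL2.const_mul {u : ℝ → ℝ} (hu : MemL2 u) (c : ℝ) : MemL2 (fun x => c * u x) :=
  memL2_of_memLp (hu.1.const_mul c) (hu.memLp.const_mul c)

lemma memL2_simpleFunc (u : SimpleFunc ℝ ℝ) : MemL2 u :=
  memL2_of_memLp u.measurable (u.memLp_of_isFiniteMeasure 2 muI)

lemma MemL2.comp {u : ℝ → ℝ} (hu : MemL2 u) {φ : ℝ → ℝ} (hφ : MeasurePreserving φ muI muI) :
    MemL2 (fun x => u (φ x)) :=
  memL2_of_memLp (hu.1.comp hφ.measurable) (hu.memLp.comp_measurePreserving hφ)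

lemma integral_comp_mp {u : ℝ → ℝ} (hu : Measurable u) {φ : ℝ → ℝ}
    (hφ : MeasurePreserving φ muI muI) : ∫ x, u (φ x) ∂muI = ∫ x, u x ∂muI := by
  conv_rhs => rw [← hφ.map_eq]
  rw [integral_map hφ.measurable.aemeasurable hu.aestronglyMeasurable]

lemma l2_nonneg (u : ℝ → ℝ) : 0 ≤ l2 u :=
  Real.rpow_nonneg (integral_nonneg fun _ => sq_nonneg _) _

lemma l2_sq (u : ℝ → ℝ) : l2 u ^ 2 = ∫ x, u x ^ 2 ∂muI := by
  unfold l2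
  rw [← Real.sqrt_eq_rpow, Real.sq_sqrt (integral_nonneg fun _ => sq_nonneg _)]

lemma l2_comp {u : ℝ → ℝ} (hu : Measurable u) {φ : ℝ → ℝ} (hφ : MeasurePreserving φ muI muI) :
    l2 (fun x => u (φ x)) = l2 u := by
  unfold l2
  rw [integral_comp_mp (u := fun x => u x ^ 2) (hu.pow_const 2) hφ]

lemma l2_const_mul (u : ℝ → ℝ) (c : ℝ) : l2 (fun x => c * u x) = |c| * l2 u := by
  unfold l2
  simp_rw [mul_pow, integral_const_mul, ← Real.sqrt_eq_rpow]
  rw [Real.sqrt_mul (sq_nonneg c), Real.sqrt_sq_eq_abs]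

lemma l2_eq_eLpNorm {u : ℝ → ℝ} (hu : MemL2 u) : l2 u = (eLpNorm u 2 muI).toReal := by
  rw [hu.memLp.eLpNorm_eq_integral_rpow_norm (by norm_num) (by norm_num), ENNReal.toReal_ofReal]
  · simp [l2]
  · positivity

lemma l2_le_add_sub {u v : ℝ → ℝ} (hu : MemL2 u) (hv : MemL2 v) :
    l2 u ≤ l2 v + l2 (fun x => u x - v x) := by
  rw [l2_eq_eLpNorm hu, l2_eq_eLpNorm hv, l2_eq_eLpNorm (hu.sub hv),
    ← ENNReal.toReal_add hv.memLp.eLpNorm_ne_top (hu.sub hv).memLp.eLpNorm_ne_top]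
  refine ENNReal.toReal_mono
    (ENNReal.add_ne_top.2 ⟨hv.memLp.eLpNorm_ne_top, (hu.sub hv).memLp.eLpNorm_ne_top⟩) ?_
  calc eLpNorm u 2 muI = eLpNorm (v + fun x => u x - v x) 2 muI := by
        congr 1; ext x; simp
    _ ≤ _ := eLpNorm_add_le hv.1.aestronglyMeasurable
        (hu.sub hv).1.aestronglyMeasurable (by norm_num)

lemma l2_sub_comm (u v : ℝ → ℝ) : l2 (fun x => u x - v x) = l2 (fun x => v x - u x) := by
  unfold l2
  simp_rw [fun x => show (u x - v x) ^ 2 = (v x - u x) ^ 2 by ring]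

lemma MemL2.integrable_mul {u v : ℝ → ℝ} (hu : MemL2 u) (hv : MemL2 v) :
    Integrable (fun x => u x * v x) muI :=
  hu.memLp.integrable_mul hv.memLp

/-- The Cauchy–Schwarz inequality. -/
lemma integral_mul_le_l2 {u v : ℝ → ℝ} (hu : MemL2 u) (hv : MemL2 v) :
    ∫ x, u x * v x ∂muI ≤ l2 u * l2 v := by
  have h := integral_mul_norm_le_Lp_mul_Lq (μ := muI) (f := u) (g := v) (p := 2) (q := 2)
    Real.HolderConjugate.two_two
    (by simpa using hu.memLp) (by simpa using hv.memLp)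
  simp only [Real.norm_eq_abs, Real.rpow_two, sq_abs] at h
  refine le_trans (integral_mono (hu.integrable_mul hv) ?_ fun x => ?_) h
  · simpa [abs_mul] using (hu.integrable_mul hv).abs
  · simpa [abs_mul] using le_abs_self (u x * v x)

/-- Jensen's inequality for the square. -/
lemma sq_integral_le {f : ℝ → ℝ} (hf : MemL2 f) :
    (∫ x, f x ∂muI) ^ 2 ≤ ∫ x, f x ^ 2 ∂muI := by
  set m := ∫ x, f x ∂muI with hm
  have h0 : 0 ≤ ∫ x, (f x - m) ^ 2 ∂muI := integral_nonneg fun _ => sq_nonneg _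
  have h1 : ∫ x, (f x - m) ^ 2 ∂muI = (∫ x, f x ^ 2 ∂muI) - 2 * m * m + m ^ 2 := by
    have h2 : Integrable (fun x => f x ^ 2) muI := hf.2
    have h3 : Integrable (fun x => 2 * m * f x) muI := hf.integrable.const_mul _
    calc _ = ∫ x, ((f x ^ 2 - 2 * m * f x) + m ^ 2) ∂muI := by congr 1; ext x; ring
      _ = _ := by
        have h4 : Integrable (fun x => f x ^ 2 - 2 * m * f x) muI := h2.sub h3
        rw [integral_add h4 (integrable_const _), integral_sub h2 h3, integral_const_mul]
        simp [← hm]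
  nlinarith

/-- Simple functions are dense in `L²([0,1])`. -/
lemma exists_simpleFunc_l2_lt {u : ℝ → ℝ} (hu : MemL2 u) {ε : ℝ} (hε : 0 < ε) :
    ∃ w : SimpleFunc ℝ ℝ, l2 (fun x => u x - w x) < ε := by
  obtain ⟨w, hw, -⟩ := hu.memLp.exists_simpleFunc_eLpNorm_sub_lt (by norm_num)
    (ε := ENNReal.ofReal ε) (by simpa using hε)
  refine ⟨w, ?_⟩
  rw [l2_eq_eLpNorm (hu.sub (memL2_simpleFunc w))]
  exact (ENNReal.toReal_lt_of_lt_ofReal hw)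

/-! ### The graphon Laplacian -/

lemma IsGraphon.abs_le_one {h : ℝ → ℝ → ℝ} (hh : IsGraphon h) (x y : ℝ) : |h x y| ≤ 1 := by
  have := hh.2.2 x y
  exact _root_.abs_le.2 ⟨by linarith [this.1], this.2⟩

lemma IsGraphon.measurable_right {h : ℝ → ℝ → ℝ} (hh : IsGraphon h) (x : ℝ) :
    Measurable (h x) := hh.2.1.comp measurable_prodMk_left

lemma IsGraphon.comp {h : ℝ → ℝ → ℝ} (hh : IsGraphon h) {φ : ℝ → ℝ} (hφ : Measurable φ) :
    IsGraphon (fun x y => h (φ x) (φ y)) :=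
  ⟨fun _ _ => hh.1 _ _,
    hh.2.1.comp ((hφ.comp measurable_fst).prodMk (hφ.comp measurable_snd)),
    fun _ _ => hh.2.2 _ _⟩

lemma lap_kernel_memL2 {h : ℝ → ℝ → ℝ} (hh : IsGraphon h) {u : ℝ → ℝ} (hu : MemL2 u) (x : ℝ) :
    MemL2 (fun y => h x y * (u x - u y)) := by
  have h1 : Measurable fun y => u x - u y := measurable_const.sub hu.1
  refine memL2_of_memLp ((hh.measurable_right x).mul h1) ?_
  refine MemLp.of_le (g := fun y => u x - u y) ((memLp_const (u x)).sub hu.memLp)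
    ((hh.measurable_right x).mul h1).aestronglyMeasurable (ae_of_all _ fun y => ?_)
  rw [norm_mul]
  exact mul_le_of_le_one_left (norm_nonneg _) (hh.abs_le_one x y)

lemma measurable_lapApply {h : ℝ → ℝ → ℝ} (hh : IsGraphon h) {u : ℝ → ℝ} (hu : Measurable u) :
    Measurable (lapApply h u) := by
  have : Measurable (Function.uncurry fun x y => h x y * (u x - u y)) :=
    hh.2.1.mul ((hu.comp measurable_fst).sub (hu.comp measurable_snd))
  exact this.stronglyMeasurable.integral_prod_right.measurable

/-- Jensen together with `(a - b)² ≤ 2a² + 2b²`. -/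
lemma lapApply_sq_le {h : ℝ → ℝ → ℝ} (hh : IsGraphon h) {u : ℝ → ℝ} (hu : MemL2 u) (x : ℝ) :
    lapApply h u x ^ 2 ≤ 2 * u x ^ 2 + 2 * l2 u ^ 2 := by
  refine (sq_integral_le (lap_kernel_memL2 hh hu x)).trans ?_
  have hi : Integrable (fun y => u y ^ 2) muI := hu.2
  calc ∫ y, (h x y * (u x - u y)) ^ 2 ∂muI
      ≤ ∫ y, (2 * u x ^ 2 + 2 * u y ^ 2) ∂muI := by
        refine integral_mono (lap_kernel_memL2 hh hu x).2
          ((integrable_const _).add (hi.const_mul 2)) fun y => ?_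
        have h1 : (h x y) ^ 2 ≤ 1 := by
          rw [← sq_abs]; exact pow_le_one₀ (abs_nonneg _) (hh.abs_le_one x y)
        simp only [mul_pow]
        nlinarith [mul_le_of_le_one_left (sq_nonneg (u x - u y)) h1, sq_nonneg (u x + u y)]
    _ = _ := by
        rw [integral_add (integrable_const _) (hi.const_mul 2), l2_sq, ← integral_const_mul]
        simp

lemma memL2_lapApply {h : ℝ → ℝ → ℝ} (hh : IsGraphon h) {u : ℝ → ℝ} (hu : MemL2 u) :
    MemL2 (lapApply h u) := by
  refine ⟨measurable_lapApply hh hu.1, ?_⟩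
  have hi : Integrable (fun y => u y ^ 2) muI := hu.2
  refine Integrable.mono' ((hi.const_mul 2).add (integrable_const (2 * l2 u ^ 2)))
    ((measurable_lapApply hh hu.1).pow_const 2).aestronglyMeasurable (ae_of_all _ fun x => ?_)
  rw [Real.norm_of_nonneg (sq_nonneg _)]
  exact lapApply_sq_le hh hu x

lemma l2_lapApply_le {h : ℝ → ℝ → ℝ} (hh : IsGraphon h) {u : ℝ → ℝ} (hu : MemL2 u) :
    l2 (lapApply h u) ≤ 2 * l2 u := by
  have hi : Integrable (fun y => u y ^ 2) muI := hu.2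
  refine le_of_sq_le_sq ?_ (by linarith [l2_nonneg u])
  calc l2 (lapApply h u) ^ 2 = ∫ x, lapApply h u x ^ 2 ∂muI := l2_sq _
    _ ≤ ∫ x, (2 * u x ^ 2 + 2 * l2 u ^ 2) ∂muI :=
        integral_mono (memL2_lapApply hh hu).2 ((hi.const_mul 2).add (integrable_const _))
          (lapApply_sq_le hh hu)
    _ = (2 * l2 u) ^ 2 := by
        rw [integral_add (hi.const_mul 2) (integrable_const _), integral_const_mul, ← l2_sq]
        simp; ring

lemma lapApply_sub {h : ℝ → ℝ → ℝ} (hh : IsGraphon h) {u v : ℝ → ℝ} (hu : MemL2 u)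
    (hv : MemL2 v) (x : ℝ) :
    lapApply h (fun x => u x - v x) x = lapApply h u x - lapApply h v x := by
  unfold lapApply
  rw [← integral_sub (lap_kernel_memL2 hh hu x).integrable (lap_kernel_memL2 hh hv x).integrable]
  congr 1; ext y; ring

lemma lapApply_const_mul (h : ℝ → ℝ → ℝ) (u : ℝ → ℝ) (c x : ℝ) :
    lapApply h (fun x => c * u x) x = c * lapApply h u x := by
  unfold lapApply
  rw [← integral_const_mul]
  congr 1; ext y; ring

lemma lapApply_comp {h : ℝ → ℝ → ℝ} (hh : IsGraphon h) {u : ℝ → ℝ} (hu : Measurable u)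
    {φ : ℝ → ℝ} (hφ : MeasurePreserving φ muI muI) (x : ℝ) :
    lapApply (fun x y => h (φ x) (φ y)) (fun x => u (φ x)) x = lapApply h u (φ x) :=
  integral_comp_mp (u := fun y => h (φ x) y * (u (φ x) - u y))
    ((hh.measurable_right _).mul (measurable_const.sub hu)) hφ

lemma bddAbove_lapNorm {h : ℝ → ℝ → ℝ} (hh : IsGraphon h) :
    BddAbove {c | ∃ u : ℝ → ℝ, MemL2 u ∧ l2 u = 1 ∧ c = l2 (lapApply h u)} := by
  refine ⟨2, ?_⟩
  rintro c ⟨u, hu, hu1, rfl⟩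
  simpa [hu1] using l2_lapApply_le hh hu

lemma exists_l2_eq_one : ∃ u : ℝ → ℝ, MemL2 u ∧ l2 u = 1 :=
  ⟨fun _ => 1, memL2_of_memLp measurable_const (memLp_const 1), by simp [l2, UI]⟩

lemma lapNorm_nonneg (h : ℝ → ℝ → ℝ) : 0 ≤ lapNorm h := by
  refine Real.sSup_nonneg ?_
  rintro c ⟨u, -, -, rfl⟩
  exact l2_nonneg _

lemma lapNorm_le {h : ℝ → ℝ → ℝ} {M : ℝ}
    (hM : ∀ u, MemL2 u → l2 (lapApply h u) ≤ M * l2 u) : lapNorm h ≤ M := by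
  obtain ⟨u₀, hu₀, h1⟩ := exists_l2_eq_one
  refine csSup_le ⟨_, u₀, hu₀, h1, rfl⟩ ?_
  rintro c ⟨u, hu, hu1, rfl⟩
  simpa [hu1] using hM u hu

lemma l2_lapApply_le_lapNorm {h : ℝ → ℝ → ℝ} (hh : IsGraphon h) {u : ℝ → ℝ} (hu : MemL2 u) :
    l2 (lapApply h u) ≤ lapNorm h * l2 u := by
  rcases (l2_nonneg u).eq_or_lt with h0 | h0
  · simpa [← h0] using l2_lapApply_le hh hu
  · have key : l2 (lapApply h fun x => (l2 u)⁻¹ * u x) ≤ lapNorm h :=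
      le_csSup (bddAbove_lapNorm hh) ⟨_, hu.const_mul _, by
        rw [l2_const_mul, abs_of_pos (inv_pos.2 h0), inv_mul_cancel₀ h0.ne'], rfl⟩
    rw [funext (lapApply_const_mul h u _), l2_const_mul, abs_of_pos (inv_pos.2 h0)] at key
    rwa [inv_mul_le_iff₀ h0, mul_comm] at key

/-! ### Testing against simple functions -/

lemma integrable_simple {D : ℝ × ℝ → ℝ} (hD : Measurable D) (hD1 : ∀ p, |D p| ≤ 1)
    (a b : SimpleFunc ℝ ℝ) {φ : ℝ → ℝ} (hφ : Measurable φ) :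
    Integrable (fun p : ℝ × ℝ => D p * (a (φ p.1) * b (φ p.2))) (muI.prod muI) := by
  obtain ⟨A, hA⟩ := a.exists_forall_norm_le
  obtain ⟨B, hB⟩ := b.exists_forall_norm_le
  have ha : Measurable fun p : ℝ × ℝ => a (φ p.1) := a.measurable.comp (hφ.comp measurable_fst)
  have hb : Measurable fun p : ℝ × ℝ => b (φ p.2) := b.measurable.comp (hφ.comp measurable_snd)
  refine Integrable.of_bound (hD.mul (ha.mul hb)).aestronglyMeasurable (1 * (A * B))
    (ae_of_all _ fun p => ?_)
  rw [norm_mul, norm_mul]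
  have hA0 : 0 ≤ A := (norm_nonneg _).trans (hA 0)
  exact mul_le_mul (hD1 p) (mul_le_mul (hA _) (hB _) (norm_nonneg _) hA0) (by positivity)
    zero_le_one

/-- A kernel that is small on rectangles is small against products of simple functions. The
constant `K` depends only on the simple functions: it is the same for every kernel and for every
rearrangement `φ` of the coordinates. -/
lemma exists_simple_bound (a b : SimpleFunc ℝ ℝ) : ∃ K : ℝ, ∀ (D : ℝ × ℝ → ℝ) (δ : ℝ),
    Measurable D → (∀ p, |D p| ≤ 1) →
    (∀ S T : Set ℝ, MeasurableSet S → MeasurableSet T →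
      |∫ p in S ×ˢ T, D p ∂(muI.prod muI)| ≤ δ) →
    ∀ φ : ℝ → ℝ, Measurable φ →
      |∫ p, D p * (a (φ p.1) * b (φ p.2)) ∂(muI.prod muI)| ≤ K * δ := by
  induction a using SimpleFunc.induction with
  | @add f g _ hf hg =>
    obtain ⟨K, hK⟩ := hf
    obtain ⟨L, hL⟩ := hg
    refine ⟨K + L, fun D δ hD hD1 hδ φ hφ => ?_⟩
    have : ∫ p, D p * ((f + g) (φ p.1) * b (φ p.2)) ∂(muI.prod muI) =
        ∫ p, D p * (f (φ p.1) * b (φ p.2)) ∂(muI.prod muI) +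
          ∫ p, D p * (g (φ p.1) * b (φ p.2)) ∂(muI.prod muI) := by
      rw [← integral_add (integrable_simple hD hD1 f b hφ) (integrable_simple hD hD1 g b hφ)]
      congr 1; ext p; simp only [SimpleFunc.coe_add, Pi.add_apply]; ring
    rw [this, add_mul]
    exact (abs_add_le _ _).trans
      (add_le_add (hK D δ hD hD1 hδ φ hφ) (hL D δ hD hD1 hδ φ hφ))
  | @const c s hs =>
    induction b using SimpleFunc.induction with
    | @add f g _ hf hg =>
      obtain ⟨K, hK⟩ := hf
      obtain ⟨L, hL⟩ := hg
      refine ⟨K + L, fun D δ hD hD1 hδ φ hφ => ?_⟩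
      set e := SimpleFunc.piecewise s hs (SimpleFunc.const ℝ c) (SimpleFunc.const ℝ 0)
      have : ∫ p, D p * (e (φ p.1) * (f + g) (φ p.2)) ∂(muI.prod muI) =
          ∫ p, D p * (e (φ p.1) * f (φ p.2)) ∂(muI.prod muI) +
            ∫ p, D p * (e (φ p.1) * g (φ p.2)) ∂(muI.prod muI) := by
        rw [← integral_add (integrable_simple hD hD1 e f hφ) (integrable_simple hD hD1 e g hφ)]
        congr 1; ext p; simp only [SimpleFunc.coe_add, Pi.add_apply]; ring
      rw [this, add_mul]
      exact (abs_add_le _ _).trans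
        (add_le_add (hK D δ hD hD1 hδ φ hφ) (hL D δ hD hD1 hδ φ hφ))
    | @const d t ht =>
      refine ⟨|c * d|, fun D δ hD hD1 hδ φ hφ => ?_⟩
      have hrect : MeasurableSet ((φ ⁻¹' s) ×ˢ (φ ⁻¹' t)) := (hφ hs).prod (hφ ht)
      have : ∀ p : ℝ × ℝ, D p *
          ((SimpleFunc.piecewise s hs (SimpleFunc.const ℝ c) (SimpleFunc.const ℝ 0)) (φ p.1) *
          (SimpleFunc.piecewise t ht (SimpleFunc.const ℝ d) (SimpleFunc.const ℝ 0)) (φ p.2)) =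
          ((φ ⁻¹' s) ×ˢ (φ ⁻¹' t)).indicator (fun p => (c * d) * D p) p := by
        intro p
        by_cases h1 : φ p.1 ∈ s <;> by_cases h2 : φ p.2 ∈ t <;>
          simp [Set.piecewise, Set.indicator, h1, h2, mul_comm]
      simp_rw [this]
      rw [integral_indicator hrect, integral_const_mul, abs_mul]
      exact mul_le_mul_of_nonneg_left (hδ _ _ (hφ hs) (hφ ht)) (abs_nonneg _)

lemma pairing_eq {h : ℝ → ℝ → ℝ} (hh : IsGraphon h) (u v : SimpleFunc ℝ ℝ) {φ : ℝ → ℝ}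
    (hφ : Measurable φ) :
    ∫ x, lapApply h (fun x => u (φ x)) x * v (φ x) ∂muI =
      ∫ p, Function.uncurry h p * ((u * v) (φ p.1) * SimpleFunc.const ℝ (1 : ℝ) (φ p.2))
          ∂(muI.prod muI) -
        ∫ p, Function.uncurry h p * (v (φ p.1) * u (φ p.2)) ∂(muI.prod muI) := by
  have h1 : ∀ p : ℝ × ℝ, |Function.uncurry h p| ≤ 1 := fun p => hh.abs_le_one _ _
  have i1 := integrable_simple hh.2.1 h1 (u * v) (SimpleFunc.const ℝ 1) hφ
  have i2 := integrable_simple hh.2.1 h1 v u hφ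
  rw [← integral_sub i1 i2]
  refine Eq.trans ?_ (integral_prod _ (i1.sub i2)).symm
  congr 1; ext x
  rw [lapApply, ← integral_mul_const]
  congr 1; ext y
  simp only [Function.uncurry, SimpleFunc.coe_mul, Pi.mul_apply, Pi.sub_apply,
    SimpleFunc.const_apply]
  ring

/-- The bilinear forms `⟨L_f ·, ·⟩` and `⟨L_g ·, ·⟩` of two graphons that
are close in cut distance are close on simple
functions, uniformly in the rearrangement `φ`. -/
lemma exists_pairing_bound (u v : SimpleFunc ℝ ℝ) : ∃ K : ℝ, ∀ (f g : ℝ → ℝ → ℝ) (δ : ℝ),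
    IsGraphon f → IsGraphon g →
    (∀ S T : Set ℝ, MeasurableSet S → MeasurableSet T →
      |∫ p in S ×ˢ T, (f p.1 p.2 - g p.1 p.2) ∂(muI.prod muI)| ≤ δ) →
    ∀ φ : ℝ → ℝ, Measurable φ →
      ∫ x, lapApply g (fun x => u (φ x)) x * v (φ x) ∂muI ≤
        ∫ x, lapApply f (fun x => u (φ x)) x * v (φ x) ∂muI + K * δ := by
  obtain ⟨K, hK⟩ := exists_simple_bound (u * v) (SimpleFunc.const ℝ 1)
  obtain ⟨L, hL⟩ := exists_simple_bound v u
  refine ⟨K + L, fun f g δ hf hg hδ φ hφ => ?_⟩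
  have hD : Measurable fun p : ℝ × ℝ => f p.1 p.2 - g p.1 p.2 := hf.2.1.sub hg.2.1
  have hD1 : ∀ p : ℝ × ℝ, |f p.1 p.2 - g p.1 p.2| ≤ 1 := fun p => by
    have h1 := hf.2.2 p.1 p.2
    have h2 := hg.2.2 p.1 p.2
    exact _root_.abs_le.2 ⟨by linarith [h1.1, h2.2], by linarith [h1.2, h2.1]⟩
  have key : ∀ a b : SimpleFunc ℝ ℝ,
      ∫ p, (f p.1 p.2 - g p.1 p.2) * (a (φ p.1) * b (φ p.2)) ∂(muI.prod muI) =
        ∫ p, Function.uncurry f p * (a (φ p.1) * b (φ p.2)) ∂(muI.prod muI) -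
          ∫ p, Function.uncurry g p * (a (φ p.1) * b (φ p.2)) ∂(muI.prod muI) := by
    intro a b
    rw [← integral_sub (integrable_simple hf.2.1 (fun p => hf.abs_le_one _ _) a b hφ)
      (integrable_simple hg.2.1 (fun p => hg.abs_le_one _ _) a b hφ)]
    congr 1; ext p; simp only [Function.uncurry]; ring
  have h1 := (_root_.abs_le.1 (hK _ δ hD hD1 hδ φ hφ)).1
  have h2 := (_root_.abs_le.1 (hL _ δ hD hD1 hδ φ hφ)).2
  rw [key] at h1 h2
  rw [pairing_eq hf u v hφ, pairing_eq hg u v hφ]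
  linarith

/-! ### The cut metric -/

lemma bddAbove_cutDist {f g : ℝ → ℝ → ℝ} (hf : IsGraphon f) (hg : IsGraphon g) :
    BddAbove {c | ∃ S T : Set ℝ, MeasurableSet S ∧ MeasurableSet T ∧ S ⊆ UI ∧ T ⊆ UI ∧
      c = |∫ x in S, ∫ y in T, (f x y - g x y)|} := by
  refine ⟨1, ?_⟩
  rintro c ⟨S, T, hS, hT, hSU, hTU, rfl⟩
  have hD1 : ∀ x y, ‖f x y - g x y‖ ≤ 1 := fun x y => by
    have h1 := hf.2.2 x y
    have h2 := hg.2.2 x y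
    exact _root_.abs_le.2 ⟨by linarith [h1.1, h2.2], by linarith [h1.2, h2.1]⟩
  have hle : ∀ S : Set ℝ, S ⊆ UI → volume.real S ≤ 1 ∧ volume S < ⊤ := fun S hS => by
    have hUI : volume UI = 1 := by simp [UI]
    have h1 : volume S ≤ 1 := hUI ▸ measure_mono hS
    exact ⟨ENNReal.toReal_le_of_le_ofReal zero_le_one (by simpa using h1),
      h1.trans_lt ENNReal.one_lt_top⟩
  have inner : ∀ x, ‖∫ y in T, (f x y - g x y)‖ ≤ 1 := fun x =>
    (norm_setIntegral_le_of_norm_le_const (hle T hTU).2 fun y _ => hD1 x y).trans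
      (by simpa using (hle T hTU).1)
  exact (norm_setIntegral_le_of_norm_le_const (hle S hSU).2 fun x _ => inner x).trans
    (by simpa using (hle S hSU).1)

lemma abs_rect_le_cutDist {f g : ℝ → ℝ → ℝ} (hf : IsGraphon f) (hg : IsGraphon g)
    (S T : Set ℝ) (hS : MeasurableSet S) (hT : MeasurableSet T) :
    |∫ p in S ×ˢ T, (f p.1 p.2 - g p.1 p.2) ∂(muI.prod muI)| ≤ cutDist f g := by
  have hUI : MeasurableSet UI := measurableSet_Icc
  have hi : Integrable (fun p : ℝ × ℝ => f p.1 p.2 - g p.1 p.2) (muI.prod muI) :=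
    (Integrable.of_bound hf.2.1.aestronglyMeasurable 1
      (ae_of_all _ fun p => hf.abs_le_one _ _)).sub
    (Integrable.of_bound hg.2.1.aestronglyMeasurable 1
      (ae_of_all _ fun p => hg.abs_le_one _ _))
  rw [setIntegral_prod _ hi.integrableOn]
  simp only [muI, Measure.restrict_restrict hS, Measure.restrict_restrict hT]
  exact le_csSup (bddAbove_cutDist hf hg)
    ⟨S ∩ UI, T ∩ UI, hS.inter hUI, hT.inter hUI, inter_subset_right, inter_subset_right, rfl⟩

/-- The infimum defining the cut metric runs over a nonempty set, since the identity is a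
measure-preserving bijection. -/
lemma exists_cutDist_lt {f g : ℝ → ℝ → ℝ} {ε : ℝ} (h : cutMetric f g < ε) :
    ∃ φ : MPB, cutDist f (fun x y => g (φ.toFun x) (φ.toFun y)) < ε := by
  have hne : {c | ∃ φ : MPB, c = cutDist f (fun x y => g (φ.toFun x) (φ.toFun y))}.Nonempty :=
    ⟨_, ⟨id, bijOn_id _, MeasurePreserving.id _⟩, rfl⟩
  obtain ⟨c, ⟨φ, rfl⟩, hc⟩ := exists_lt_of_csInf_lt hne h
  exact ⟨φ, hc⟩

/-! ### Lower semi-continuity -/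

/-- If `h` is a limit in the cut metric of graphons with Laplacian norm less than `M`, then
`⟨L_h u, v⟩ ≤ M ‖u‖ ‖v‖` for simple `u` and `v`: relabelling `h`, `u` and `v` by the same
measure-preserving map changes neither side. -/
lemma pairing_le_of_approx {h : ℝ → ℝ → ℝ} (hh : IsGraphon h) {M : ℝ}
    (H : ∀ ε > 0, ∃ f, IsGraphon f ∧ lapNorm f < M ∧ cutMetric f h < ε) (u v : SimpleFunc ℝ ℝ) :
    ∫ x, lapApply h u x * v x ∂muI ≤ M * l2 u * l2 v := by
  obtain ⟨K, hK⟩ := exists_pairing_bound u v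
  refine le_of_forall_pos_le_add fun ε hε => ?_
  have hK0 : 0 < |K| + 1 := by positivity
  obtain ⟨f, hf, hfM, hfh⟩ := H (ε / (|K| + 1)) (by positivity)
  obtain ⟨φ, hφ⟩ := exists_cutDist_lt hfh
  have hmp : MeasurePreserving φ.toFun muI muI := φ.measurePreserving
  have hu := memL2_simpleFunc u
  have hv := memL2_simpleFunc v
  have hg := hh.comp hmp.measurable
  have hδ := abs_rect_le_cutDist hf hg
  have hδ0 : 0 ≤ cutDist f (fun x y => h (φ.toFun x) (φ.toFun y)) :=
    (abs_nonneg _).trans (hδ ∅ ∅ .empty .empty)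
  have hmain := hK f _ _ hf hg hδ φ.toFun hmp.measurable
  simp_rw [lapApply_comp hh hu.1 hmp] at hmain
  rw [integral_comp_mp (u := fun x => lapApply h u x * v x)
    ((measurable_lapApply hh hu.1).mul hv.1) hmp] at hmain
  have hcs := integral_mul_le_l2 (memL2_lapApply hf (hu.comp hmp)) (hv.comp hmp)
  have hlap := l2_lapApply_le_lapNorm hf (hu.comp hmp)
  rw [l2_comp hv.1 hmp] at hcs
  rw [l2_comp hu.1 hmp] at hlap
  have h1 : lapNorm f * l2 u ≤ M * l2 u := mul_le_mul_of_nonneg_right hfM.le (l2_nonneg _)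
  have h2 := mul_le_mul_of_nonneg_right (hlap.trans h1) (l2_nonneg v)
  have h3 : K * cutDist f (fun x y => h (φ.toFun x) (φ.toFun y)) ≤ ε := by
    calc _ ≤ (|K| + 1) * cutDist f (fun x y => h (φ.toFun x) (φ.toFun y)) :=
          mul_le_mul_of_nonneg_right (by linarith [le_abs_self K]) hδ0
      _ ≤ (|K| + 1) * (ε / (|K| + 1)) := mul_le_mul_of_nonneg_left hφ.le hK0.le
      _ = ε := by field_simp
  linarith

/-- Duality: a bound on pairings with simple functions bounds the norm. -/
lemma l2_le_of_pairing_le {w : ℝ → ℝ} (hw : MemL2 w) {C : ℝ} (hC : 0 ≤ C)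
    (H : ∀ v : SimpleFunc ℝ ℝ, ∫ x, w x * v x ∂muI ≤ C * l2 v) : l2 w ≤ C := by
  have key : l2 w * l2 w ≤ C * l2 w := by
    refine le_of_forall_pos_le_add fun ε hε => ?_
    have hpos : 0 < l2 w + C + 1 := by linarith [l2_nonneg w]
    obtain ⟨v, hv⟩ := exists_simpleFunc_l2_lt hw (ε := ε / (l2 w + C + 1)) (by positivity)
    have hvm := memL2_simpleFunc v
    have h1 : l2 w * l2 w =
        ∫ x, w x * v x ∂muI + ∫ x, w x * (w x - v x) ∂muI := by
      rw [← sq, l2_sq, ← integral_add (hw.integrable_mul hvm) (hw.integrable_mul (hw.sub hvm))]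
      congr 1; ext x; ring
    have h2 := integral_mul_le_l2 hw (hw.sub hvm)
    have h3 : l2 v ≤ l2 w + l2 (fun x => w x - v x) := by
      rw [l2_sub_comm]; exact l2_le_add_sub hvm hw
    have h4 := mul_le_mul_of_nonneg_left h3 hC
    have h5 : (l2 w + C + 1) * l2 (fun x => w x - v x) ≤ ε := by
      calc _ ≤ (l2 w + C + 1) * (ε / (l2 w + C + 1)) :=
            mul_le_mul_of_nonneg_left hv.le hpos.le
        _ = ε := by field_simp
    nlinarith [H v, l2_nonneg (fun x => w x - v x)]
  rcases (l2_nonneg w).eq_or_lt with h0 | h0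
  · rwa [← h0]
  · exact le_of_mul_le_mul_right key h0

lemma lapNorm_le_of_approx {h : ℝ → ℝ → ℝ} (hh : IsGraphon h) {M : ℝ}
    (H : ∀ ε > 0, ∃ f, IsGraphon f ∧ lapNorm f < M ∧ cutMetric f h < ε) : lapNorm h ≤ M := by
  have hM : 0 ≤ M := by
    obtain ⟨f, -, hf, -⟩ := H 1 one_pos
    exact (lapNorm_nonneg f).trans hf.le
  refine lapNorm_le fun u hu => le_of_forall_pos_le_add fun ε hε => ?_
  obtain ⟨w, hw⟩ := exists_simpleFunc_l2_lt hu (ε := ε / (M + 2)) (by positivity)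
  have hwm := memL2_simpleFunc w
  have h1 : l2 (lapApply h w) ≤ M * l2 w :=
    l2_le_of_pairing_le (memL2_lapApply hh hwm) (mul_nonneg hM (l2_nonneg _))
      (pairing_le_of_approx hh H w)
  have h2 := l2_le_add_sub (memL2_lapApply hh hu) (memL2_lapApply hh hwm)
  rw [← funext (lapApply_sub hh hu hwm)] at h2
  have h3 := l2_lapApply_le hh (hu.sub hwm)
  have h4 : l2 w ≤ l2 u + l2 (fun x => u x - w x) := by
    rw [l2_sub_comm]; exact l2_le_add_sub hwm hu
  have h5 := mul_le_mul_of_nonneg_left h4 hM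
  have h6 : (M + 2) * l2 (fun x => u x - w x) ≤ ε := by
    calc _ ≤ (M + 2) * (ε / (M + 2)) := mul_le_mul_of_nonneg_left hw.le (by positivity)
      _ = ε := by field_simp
  linarith

/-- **The Laplacian graphon operator is bounded and its norm is lower
semi-continuous in the cut metric.** -/
theorem laplacian_bounded_and_lsc :
    (∀ h : ℝ → ℝ → ℝ, IsGraphon h → ∀ u : ℝ → ℝ, MemL2 u →
      l2 (lapApply h u) ≤ 2 * l2 u) ∧
    (∀ h : ℝ → ℝ → ℝ, IsGraphon h → ∀ hn : ℕ → ℝ → ℝ → ℝ,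
      (∀ n, IsGraphon (hn n)) →
      Tendsto (fun n => cutMetric (hn n) h) atTop (nhds 0) →
      lapNorm h ≤ Filter.liminf (fun n => lapNorm (hn n)) atTop) := by
  refine ⟨fun h hh u hu => l2_lapApply_le hh hu, fun h hh hn hhn hlim => ?_⟩
  refine le_of_forall_gt_imp_ge_of_dense fun M hM => lapNorm_le_of_approx hh fun ε hε => ?_
  -- The norms are at most `2`, so the real-valued `liminf` is not a junk value.
  have hcob : IsCoboundedUnder (· ≥ ·) atTop fun n => lapNorm (hn n) :=
    (isBoundedUnder_of ⟨2, fun n => lapNorm_le fun u hu => l2_lapApply_le (hhn n) hu⟩ :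
      IsBoundedUnder (· ≤ ·) atTop fun n => lapNorm (hn n)).isCoboundedUnder_ge
  obtain ⟨n, hn1, hn2⟩ :=
    ((frequently_lt_of_liminf_lt hcob hM).and_eventually (hlim.eventually_lt_const hε)).exists
  exact ⟨hn n, hhn n, hn1, hn2⟩
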